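/- The function x ↦ (2/x² − sin(2x)/x³), extended by its limit 4/3 at x = 0, is a smooth, bounded function on ℝ, and can be written as F₁(x²) for a smooth function F₁ with all derivatives bounded. -/

import Mathlib

open Real

def BD (S : Set ℝ) : ℕ → (ℝ → ℝ) → Prop
  | 0, f => ∃ C : ℝ, ∀ t ∈ S, |f t| ≤ C
  | k + 1, f => (∃ C : ℝ, ∀ t ∈ S, |f t| ≤ C) ∧
      ∃ f' : ℝ → ℝ, (∀ t ∈ S, HasDerivAt f (f' t) t) ∧ BD S k f'

lemma BD.bdd {S : Set ℝ} {k : ℕ} {f : ℝ → ℝ} (h : BD S k f) :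
    ∃ C : ℝ, ∀ t ∈ S, |f t| ≤ C := by
  cases k with
  | zero => exact h
  | succ k => exact h.1

lemma BD.pred {S : Set ℝ} {k : ℕ} : ∀ {f : ℝ → ℝ}, BD S (k + 1) f → BD S k f := by
  induction k with
  | zero => intro f h; exact h.1
  | succ k ih =>
    rintro f ⟨h, f', h1, h2⟩
    exact ⟨h, f', h1, ih h2⟩

lemma BD.const {S : Set ℝ} (k : ℕ) : ∀ c : ℝ, BD S k (fun _ => c) := by
  induction k with
  | zero => intro c; exact ⟨|c|, fun _ _ => le_rfl⟩
  | succ k ih =>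
    intro c
    exact ⟨⟨|c|, fun _ _ => le_rfl⟩, fun _ => 0, fun t _ => hasDerivAt_const t c, ih 0⟩

lemma bdd_add {S : Set ℝ} {f g : ℝ → ℝ} (hf : ∃ C : ℝ, ∀ t ∈ S, |f t| ≤ C)
    (hg : ∃ C : ℝ, ∀ t ∈ S, |g t| ≤ C) : ∃ C : ℝ, ∀ t ∈ S, |f t + g t| ≤ C := by
  obtain ⟨C, hC⟩ := hf
  obtain ⟨D, hD⟩ := hg
  exact ⟨C + D, fun t ht => (abs_add_le _ _).trans (add_le_add (hC t ht) (hD t ht))⟩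

lemma bdd_mul {S : Set ℝ} {f g : ℝ → ℝ} (hf : ∃ C : ℝ, ∀ t ∈ S, |f t| ≤ C)
    (hg : ∃ C : ℝ, ∀ t ∈ S, |g t| ≤ C) : ∃ C : ℝ, ∀ t ∈ S, |f t * g t| ≤ C := by
  obtain ⟨C, hC⟩ := hf
  obtain ⟨D, hD⟩ := hg
  refine ⟨C * D, fun t ht => ?_⟩
  rw [abs_mul]
  exact mul_le_mul (hC t ht) (hD t ht) (abs_nonneg _) ((abs_nonneg _).trans (hC t ht))

lemma BD.add {S : Set ℝ} {k : ℕ} : ∀ {f g : ℝ → ℝ}, BD S k f → BD S k g →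
    BD S k (fun t => f t + g t) := by
  induction k with
  | zero => intro f g hf hg; exact bdd_add hf hg
  | succ k ih =>
    rintro f g ⟨hf, f', hf1, hf2⟩ ⟨hg, g', hg1, hg2⟩
    exact ⟨bdd_add hf hg, fun t => f' t + g' t, fun t ht => (hf1 t ht).add (hg1 t ht),
      ih hf2 hg2⟩

lemma BD.mul {S : Set ℝ} {k : ℕ} : ∀ {f g : ℝ → ℝ}, BD S k f → BD S k g →
    BD S k (fun t => f t * g t) := by
  induction k with
  | zero => intro f g hf hg; exact bdd_mul hf hg
  | succ k ih =>
    intro f g hf0 hg0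
    obtain ⟨hf, f', hf1, hf2⟩ := id hf0
    obtain ⟨hg, g', hg1, hg2⟩ := id hg0
    exact ⟨bdd_mul hf hg, fun t => f' t * g t + f t * g' t,
      fun t ht => (hf1 t ht).mul (hg1 t ht), (ih hf2 hg0.pred).add (ih hf0.pred hg2)⟩

lemma BD.iter {S : Set ℝ} (hS : IsOpen S) {k : ℕ} : ∀ {f g : ℝ → ℝ}, BD S k f →
    (∀ t ∈ S, g t = f t) → ∃ C : ℝ, ∀ t ∈ S, |iteratedDeriv k g t| ≤ C := by
  induction k with
  | zero =>
    rintro f g ⟨C, hC⟩ h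
    refine ⟨C, fun t ht => ?_⟩
    rw [iteratedDeriv_zero, h t ht]
    exact hC t ht
  | succ k ih =>
    rintro f g ⟨-, f', hf1, hf2⟩ h
    rw [iteratedDeriv_succ']
    refine ih hf2 fun t ht => ?_
    have : g =ᶠ[nhds t] f := Filter.eventually_of_mem (hS.mem_nhds ht) h
    rw [this.deriv_eq]
    exact (hf1 t ht).deriv

lemma sqrt_pos' {t : ℝ} (ht : t ∈ Set.Ioi (1 : ℝ)) : 1 < √t := by
  have : (1 : ℝ) < t := ht
  exact Real.lt_sqrt_of_sq_lt (by simpa using this)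

lemma BD_u (k : ℕ) : BD (Set.Ioi 1) k (fun t => (√t)⁻¹) := by
  have hb : ∃ C : ℝ, ∀ t ∈ Set.Ioi (1 : ℝ), |(√t)⁻¹| ≤ C := by
    refine ⟨1, fun t ht => ?_⟩
    have := sqrt_pos' ht
    rw [abs_of_nonneg (by positivity)]
    exact inv_le_one_of_one_le₀ this.le
  induction k with
  | zero => exact hb
  | succ k ih =>
    refine ⟨hb, fun t => (-1/2) * ((√t)⁻¹ * ((√t)⁻¹ * (√t)⁻¹)), fun t ht => ?_,
      (BD.const k _).mul (ih.mul (ih.mul ih))⟩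
    have h1 := sqrt_pos' ht
    have h0 : t ≠ 0 := by
      have : (1 : ℝ) < t := ht
      linarith
    have := (Real.hasDerivAt_sqrt h0).inv (by positivity)
    refine this.congr_deriv ?_
    field_simp

lemma BD_sc (k : ℕ) : BD (Set.Ioi 1) k (fun t => sin (2 * √t)) ∧
    BD (Set.Ioi 1) k (fun t => cos (2 * √t)) := by
  have hs : ∃ C : ℝ, ∀ t ∈ Set.Ioi (1 : ℝ), |sin (2 * √t)| ≤ C :=
    ⟨1, fun t _ => abs_sin_le_one _⟩
  have hc : ∃ C : ℝ, ∀ t ∈ Set.Ioi (1 : ℝ), |cos (2 * √t)| ≤ C :=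
    ⟨1, fun t _ => abs_cos_le_one _⟩
  have hd : ∀ t ∈ Set.Ioi (1 : ℝ), HasDerivAt (fun t => 2 * √t) ((√t)⁻¹) t := by
    intro t ht
    have h1 := sqrt_pos' ht
    have h0 : t ≠ 0 := by
      have : (1 : ℝ) < t := ht
      linarith
    refine ((Real.hasDerivAt_sqrt h0).const_mul 2).congr_deriv ?_
    field_simp
  induction k with
  | zero => exact ⟨hs, hc⟩
  | succ k ih =>
    refine ⟨⟨hs, _, fun t ht => (hd t ht).sin, ih.2.mul (BD_u k)⟩,
      ⟨hc, fun t => (-1) * (sin (2 * √t) * (√t)⁻¹), fun t ht => ?_,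
        (BD.const k _).mul (ih.1.mul (BD_u k))⟩⟩
    refine (hd t ht).cos.congr_deriv ?_
    ring

lemma BD_main (k : ℕ) : BD (Set.Ioi 1) k
    (fun t => 2 * ((√t)⁻¹ * (√t)⁻¹) +
      (-1) * (sin (2 * √t) * ((√t)⁻¹ * ((√t)⁻¹ * (√t)⁻¹)))) :=
  ((BD.const k 2).mul ((BD_u k).mul (BD_u k))).add
    ((BD.const k (-1)).mul ((BD_sc k).1.mul ((BD_u k).mul ((BD_u k).mul (BD_u k)))))

noncomputable def cf (n : ℕ) : ℝ := (-1) ^ n * 2 ^ (2 * n + 3) / ((2 * n + 3).factorial : ℝ)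

lemma cf_radius : (FormalMultilinearSeries.ofScalars ℝ cf).radius = ⊤ := by
  apply FormalMultilinearSeries.ofScalars_radius_eq_top_of_tendsto
  · refine Filter.Eventually.of_forall fun n => ?_
    unfold cf
    positivity
  · have : ∀ n : ℕ, ‖cf n.succ‖ / ‖cf n‖ = 4 / ((2 * n + 5) * (2 * n + 4)) := by
      intro n
      have e : ((2 * (n + 1) + 3).factorial : ℝ)
          = (2 * n + 5) * ((2 * n + 4) * ((2 * n + 3).factorial : ℝ)) := by
        rw [show 2 * (n + 1) + 3 = (2 * n + 3) + 1 + 1 by ring, Nat.factorial_succ,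
          Nat.factorial_succ]
        push_cast
        ring
      simp only [cf, norm_div, norm_mul, norm_pow, norm_neg, norm_one, one_pow, one_mul,
        Nat.succ_eq_add_one, RCLike.norm_natCast, Real.norm_ofNat, e]
      have : ((2 * n + 3).factorial : ℝ) ≠ 0 := by positivity
      rw [Real.norm_of_nonneg (by positivity : (0 : ℝ) ≤ 2 * n + 5),
        Real.norm_of_nonneg (by positivity : (0 : ℝ) ≤ 2 * n + 4)]
      field_simp
      ring
    simp_rw [this]
    have h4 := (tendsto_const_div_atTop_nhds_zero_nat (4 : ℝ))
    refine squeeze_zero' (Filter.Eventually.of_forall fun n => by positivity) ?_ h4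
    filter_upwards [Filter.eventually_gt_atTop 0] with n hn
    have hn' : (0 : ℝ) < n := by exact_mod_cast hn
    gcongr
    nlinarith

noncomputable def GG : ℝ → ℝ := FormalMultilinearSeries.ofScalarsSum cf

lemma GG_contDiff : ContDiff ℝ (⊤ : ℕ∞) GG := by
  have h := (FormalMultilinearSeries.ofScalars ℝ cf).hasFPowerSeriesOnBall
    (by rw [cf_radius]; exact ENNReal.coe_lt_top)
  rw [cf_radius] at h
  apply AnalyticOnNhd.contDiff
  intro x _
  exact h.analyticAt_of_mem (by simp)

lemma GG_eq (x : ℝ) : GG (x ^ 2) =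
    if x = 0 then 4/3 else 2 / x ^ 2 - Real.sin (2 * x) / x ^ 3 := by
  split_ifs with hx
  · subst hx
    simp only [GG, ne_eq, OfNat.ofNat_ne_zero, not_false_eq_true, zero_pow,
      FormalMultilinearSeries.ofScalarsSum_zero]
    norm_num [cf, Nat.factorial]
  · have h := (hasSum_nat_add_iff' 1).2 (Real.hasSum_sin (2 * x))
    have h2 := h.mul_left (-1 / x ^ 3)
    rw [GG, FormalMultilinearSeries.ofScalars_sum_eq]
    have h3 : HasSum (fun n => cf n • (x ^ 2) ^ n)
        (2 / x ^ 2 - Real.sin (2 * x) / x ^ 3) := by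
      have e1 : (fun n => cf n • (x ^ 2) ^ n) = fun i => -1 / x ^ 3 *
          ((-1) ^ (i + 1) * (2 * x) ^ (2 * (i + 1) + 1) / ((2 * (i + 1) + 1).factorial : ℝ)) := by
        funext n
        rw [show 2 * (n + 1) + 1 = 2 * n + 3 by ring]
        simp only [cf, smul_eq_mul]
        have : ((2 * n + 3).factorial : ℝ) ≠ 0 := by positivity
        field_simp
        ring
      rw [e1]
      have e2 : 2 / x ^ 2 - Real.sin (2 * x) / x ^ 3 = -1 / x ^ 3 * (sin (2 * x) -
          ∑ i ∈ Finset.range 1, (-1) ^ i * (2 * x) ^ (2 * i + 1) / ((2 * i + 1).factorial : ℝ)) := by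
        simp
        field_simp
        ring
      rw [e2]
      exact h2
    exact h3.tsum_eq

theorem skyrme_stmt17 :
    ∃ F₁ : ℝ → ℝ, ContDiff ℝ (⊤ : ℕ∞) F₁ ∧
      (∀ k : ℕ, ∃ C : ℝ, ∀ x : ℝ, |iteratedDeriv k F₁ x| ≤ C) ∧
      (∀ x : ℝ, F₁ (x ^ 2) =
        if x = 0 then 4/3 else 2 / x ^ 2 - Real.sin (2 * x) / x ^ 3) := by
  have hsm : ContDiff ℝ (⊤ : ℕ∞) (fun t => Real.smoothTransition (t + 1) * GG t) :=
    (Real.smoothTransition.contDiff.comp (contDiff_id.add contDiff_const)).mul GG_contDiff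
  have heq : ∀ x : ℝ, Real.smoothTransition (x ^ 2 + 1) * GG (x ^ 2) =
        if x = 0 then 4/3 else 2 / x ^ 2 - Real.sin (2 * x) / x ^ 3 := by
    intro x
    rw [Real.smoothTransition.one_of_one_le (by nlinarith [sq_nonneg x]), one_mul, GG_eq]
  refine ⟨_, hsm, fun k => ?_, heq⟩
  obtain ⟨C1, h1⟩ := BD.iter isOpen_Ioi (BD_main k)
    (g := fun t => Real.smoothTransition (t + 1) * GG t) (by
      intro t ht
      have hp := sqrt_pos' ht
      have h0 : (0 : ℝ) ≤ t := by
        have : (1 : ℝ) < t := ht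
        linarith
      have := heq (√t)
      rw [Real.sq_sqrt h0, if_neg (by positivity)] at this
      simp only [this]
      nth_rewrite 1 [← Real.sq_sqrt h0]
      field_simp
      try ring)
  obtain ⟨C2, h2⟩ := BD.iter isOpen_Iio (BD.const (S := Set.Iio (-1)) k 0)
    (g := fun t => Real.smoothTransition (t + 1) * GG t) (by
      intro t ht
      have : t < -1 := ht
      rw [Real.smoothTransition.zero_of_nonpos (by linarith), zero_mul])
  obtain ⟨C3, h3⟩ := (isCompact_Icc (a := (-1 : ℝ)) (b := 1)).exists_bound_of_continuousOn
    (hsm.continuous_iteratedDeriv k (by exact_mod_cast le_top)).continuousOn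
  refine ⟨max C1 (max C2 C3), fun x => ?_⟩
  rcases lt_or_ge 1 x with hx | hx
  · exact (h1 x hx).trans (le_max_left _ _)
  rcases lt_or_ge x (-1) with hy | hy
  · exact (h2 x hy).trans ((le_max_left _ _).trans (le_max_right _ _))
  · exact (h3 x ⟨hy, hx⟩).trans ((le_max_right _ _).trans (le_max_right _ _))
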